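/- The Leibniz algebra R(μ₁,k) with basis {e₁,…,e_{n-2k}, f₁,…,f_{2k}, x₁,…,x_k} and non-zero products [eᵢ,e₁] = e_{i+1} (1 ≤ i ≤ n-2k-1), [e₁,fⱼ] = f_{k+j} (1 ≤ j ≤ k), [eᵢ,xⱼ] = Σ_{t=i+1}^{n-2k} a_{t-i+1,j} e_t, [fᵢ,xᵢ] = fᵢ, [f_{k+i},xᵢ] = f_{k+i}, [xᵢ,fᵢ] = -fᵢ, [xᵢ,fⱼ] = φ_{i,j} f_{k+j} (i ≠ j), [xᵢ,xⱼ] = δ_{i,j} e_{n-2k}, satisfies the Leibniz identity for all choices of parameters a_{t,j}, φ_{i,j}, δ_{i,j} ∈ ℂ. -/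

import Mathlib

noncomputable section

open Finset

/-- Underlying space of `R(μ₁,k)`: basis `e₁,…,e_{n-2k}`, `f₁,…,f_{2k}`,
`x₁,…,x_k`. -/
abbrev LRmu1 (n k : ℕ) := (Fin (n - 2 * k) ⊕ (Fin (2 * k) ⊕ Fin k)) → ℂ

/-- `1`-indexed basis vector `eᵢ` (zero out of range). -/
def Eb (n k : ℕ) (i : ℕ) : LRmu1 n k := fun s =>
  match s with
  | .inl a => if (a : ℕ) + 1 = i then 1 else 0
  | _ => 0

/-- `1`-indexed basis vector `fᵢ` (zero out of range). -/
def Fb (n k : ℕ) (i : ℕ) : LRmu1 n k := fun s =>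
  match s with
  | .inr (.inl a) => if (a : ℕ) + 1 = i then 1 else 0
  | _ => 0

/-- Structure constants of `R(μ₁,k)(a,φ,δ)`:
`[eᵢ,e₁] = e_{i+1}` (1 ≤ i ≤ n-2k-1), `[e₁,fⱼ] = f_{k+j}` (1 ≤ j ≤ k),
`[eᵢ,xⱼ] = Σ_{t=i+1}^{n-2k} a_{t-i+1,j} e_t`, `[fᵢ,xᵢ] = fᵢ`,
`[f_{k+i},xᵢ] = f_{k+i}`, `[xᵢ,fᵢ] = -fᵢ`, `[xᵢ,fⱼ] = φ_{i,j} f_{k+j}` (i ≠ j),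
`[xᵢ,xⱼ] = δ_{i,j} e_{n-2k}`. -/
def cRμ1 (n k : ℕ) (a φ δ : ℕ → ℕ → ℂ) :
    (Fin (n - 2 * k) ⊕ (Fin (2 * k) ⊕ Fin k)) →
      (Fin (n - 2 * k) ⊕ (Fin (2 * k) ⊕ Fin k)) → LRmu1 n k
  | .inl p, .inl q => if (q : ℕ) = 0 then Eb n k ((p : ℕ) + 2) else 0
  | .inl p, .inr (.inl q) =>
      if (p : ℕ) = 0 ∧ (q : ℕ) < k then Fb n k ((q : ℕ) + 1 + k) else 0
  | .inl p, .inr (.inr q) =>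
      ∑ t ∈ Finset.Icc ((p : ℕ) + 2) (n - 2 * k), a (t - (p : ℕ)) ((q : ℕ) + 1) • Eb n k t
  | .inr (.inl p), .inr (.inr q) =>
      if (p : ℕ) = (q : ℕ) ∨ (p : ℕ) = (q : ℕ) + k then Fb n k ((p : ℕ) + 1) else 0
  | .inr (.inr p), .inr (.inl q) =>
      if (p : ℕ) = (q : ℕ) then -Fb n k ((q : ℕ) + 1)
      else if (q : ℕ) < k then φ ((p : ℕ) + 1) ((q : ℕ) + 1) • Fb n k ((q : ℕ) + 1 + k) else 0
  | .inr (.inr p), .inr (.inr q) => δ ((p : ℕ) + 1) ((q : ℕ) + 1) • Eb n k (n - 2 * k)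
  | _, _ => 0

/-- Bracket of `R(μ₁,k)(a,φ,δ)`. -/
def brkRμ1 (n k : ℕ) (a φ δ : ℕ → ℕ → ℂ) (x y : LRmu1 n k) : LRmu1 n k :=
  ∑ i, ∑ j, (x i * y j) • cRμ1 n k a φ δ i j

/-!
Up to a multiple of `e_{n-2k}`, the component of `[u, y]` along the `eᵢ` is the image of that of `u`
under a polynomial without constant term, depending on `y`, in the nilpotent shift `eᵢ ↦ e_{i+1}`;
hence these operators commute with one another and kill `e_{n-2k}`. A bracket has no component
along `e₁` or the `xⱼ`, so it acts trivially on the `eᵢ` from the right and on the `fⱼ` from the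
left. What remains of the Leibniz identity are polynomial identities in the algebra `ℂᵏ`.
-/

/-- The nilpotent shift `(v₀, v₁, …) ↦ (0, v₀, v₁, …)` on `Rᴺ`: right multiplication by `e₁` on the
span of the `eᵢ`. -/
def shift (R : Type*) [Semiring R] (N : ℕ) : Module.End R (Fin N → R) where
  toFun v p := if (p : ℕ) = 0 then 0 else v ⟨p - 1, by omega⟩
  map_add' v w := by ext p; dsimp; split_ifs <;> simp
  map_smul' c v := by ext p; dsimp; split_ifs <;> simp

lemma shift_apply_zero {R : Type*} [Semiring R] {N : ℕ} [NeZero N] (v : Fin N → R) :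
    shift R N v 0 = 0 := by
  simp [shift]

namespace LRmu1

section Coordinates

variable {n k : ℕ}

/-- The index of `f_{j+1}` among `f₁, …, f_{2k}`, for `j < k`. -/
def fLow (j : Fin k) : Fin (2 * k) := finCongr (two_mul k).symm (Fin.castAdd k j)

/-- The index of `f_{k+j+1}` among `f₁, …, f_{2k}`, for `j < k`. -/
def fHigh (j : Fin k) : Fin (2 * k) := finCongr (two_mul k).symm (Fin.natAdd k j)

@[simp]
lemma val_fLow (j : Fin k) : (fLow j : ℕ) = j := rfl

@[simp]
lemma val_fHigh (j : Fin k) : (fHigh j : ℕ) = k + j := rfl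

lemma sum_fin_two_mul {M : Type*} [AddCommMonoid M] (g : Fin (2 * k) → M) :
    ∑ p, g p = ∑ j, g (fLow j) + ∑ j, g (fHigh j) := by
  rw [← (finCongr (two_mul k).symm).sum_comp, Fin.sum_univ_add]
  rfl

/-- The coordinates of `e₁, …, e_{n-2k}`. -/
def ePart : LRmu1 n k →ₗ[ℂ] Fin (n - 2 * k) → ℂ := LinearMap.funLeft ℂ ℂ Sum.inl

/-- The coordinates of `f₁, …, f_k`. -/
def fLowPart : LRmu1 n k →ₗ[ℂ] Fin k → ℂ := LinearMap.funLeft ℂ ℂ fun j => .inr (.inl (fLow j))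

/-- The coordinates of `f_{k+1}, …, f_{2k}`. -/
def fHighPart : LRmu1 n k →ₗ[ℂ] Fin k → ℂ := LinearMap.funLeft ℂ ℂ fun j => .inr (.inl (fHigh j))

/-- The coordinates of `x₁, …, x_k`. -/
def xPart : LRmu1 n k →ₗ[ℂ] Fin k → ℂ := LinearMap.funLeft ℂ ℂ fun j => .inr (.inr j)

lemma ePart_apply (x : LRmu1 n k) (p : Fin (n - 2 * k)) : ePart x p = x (.inl p) := rfl

lemma fLowPart_apply (x : LRmu1 n k) (j : Fin k) : fLowPart x j = x (.inr (.inl (fLow j))) := rfl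

lemma fHighPart_apply (x : LRmu1 n k) (j : Fin k) : fHighPart x j = x (.inr (.inl (fHigh j))) := rfl

lemma xPart_apply (x : LRmu1 n k) (j : Fin k) : xPart x j = x (.inr (.inr j)) := rfl

lemma ext_parts {x y : LRmu1 n k} (he : ePart x = ePart y)
    (hl : fLowPart x = fLowPart y) (hh : fHighPart x = fHighPart y)
    (hx : xPart x = xPart y) : x = y := by
  ext (p | p | p)
  · exact congrFun he p
  · obtain ⟨s, rfl⟩ := (finCongr (two_mul k).symm).surjective p
    induction s using Fin.addCases with
    | left j => exact congrFun hl j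
    | right j => exact congrFun hh j
  · exact congrFun hx p

lemma ePart_Eb_succ (p : Fin (n - 2 * k)) : ePart (Eb n k (p + 1)) = Pi.single p 1 := by
  ext q
  simp [ePart_apply, Eb, Pi.single_apply, Fin.ext_iff]

lemma ePart_Eb_of_lt {i : ℕ} (hi : n - 2 * k < i) : ePart (Eb n k i) = 0 := by
  ext q
  have : (q : ℕ) + 1 ≠ i := by omega
  simp [ePart_apply, Eb, this]

lemma shift_ePart_Eb (i : ℕ) :
    shift ℂ (n - 2 * k) (ePart (Eb n k (i + 1))) = ePart (Eb n k (i + 2)) := by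
  ext p
  simp only [shift, ePart_apply, Eb, LinearMap.coe_mk, AddHom.coe_mk]
  split_ifs <;> first | rfl | omega

lemma shift_pow_ePart_Eb (r i : ℕ) :
    (shift ℂ (n - 2 * k) ^ r) (ePart (Eb n k (i + 1))) = ePart (Eb n k (i + r + 1)) := by
  induction r with
  | zero => simp
  | succ r ih => rw [pow_succ', Module.End.mul_apply, ih, shift_ePart_Eb, ← add_assoc i]

lemma ePart_eq_sum (x : LRmu1 n k) :
    ePart x = ∑ p : Fin (n - 2 * k), x (.inl p) • ePart (Eb n k (p + 1)) := by
  simp only [ePart_Eb_succ]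
  exact pi_eq_sum_univ' (ePart x)

@[simp]
lemma fLowPart_Eb (i : ℕ) : fLowPart (Eb n k i) = 0 := rfl

@[simp]
lemma fHighPart_Eb (i : ℕ) : fHighPart (Eb n k i) = 0 := rfl

@[simp]
lemma xPart_Eb (i : ℕ) : xPart (Eb n k i) = 0 := rfl

@[simp]
lemma ePart_Fb (i : ℕ) : ePart (Fb n k i) = 0 := rfl

@[simp]
lemma xPart_Fb (i : ℕ) : xPart (Fb n k i) = 0 := rfl

@[simp]
lemma fLowPart_Fb_low (j : Fin k) : fLowPart (Fb n k (j + 1)) = Pi.single j 1 := by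
  ext l
  simp [fLowPart_apply, Fb, Pi.single_apply, Fin.ext_iff]

@[simp]
lemma fHighPart_Fb_low (j : Fin k) : fHighPart (Fb n k (j + 1)) = 0 := by
  ext l
  have : k + (l : ℕ) ≠ j := by omega
  simp [fHighPart_apply, Fb, this]

@[simp]
lemma fLowPart_Fb_high (j : Fin k) : fLowPart (Fb n k (j + 1 + k)) = 0 := by
  ext l
  have : (l : ℕ) + 1 ≠ j + 1 + k := by omega
  simp [fLowPart_apply, Fb, this]

@[simp]
lemma fHighPart_Fb_high (j : Fin k) :
    fHighPart (Fb n k (j + 1 + k)) = Pi.single j 1 := by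
  ext l
  have : k + (l : ℕ) + 1 = j + 1 + k ↔ l = j := by omega
  simp [fHighPart_apply, Fb, this, Pi.single_apply]

end Coordinates

section StructureConstants

variable {n k : ℕ} (a φ δ : ℕ → ℕ → ℂ)

lemma cRμ1_e_e [NeZero (n - 2 * k)] (p q : Fin (n - 2 * k)) :
    cRμ1 n k a φ δ (.inl p) (.inl q) = if q = 0 then Eb n k (p + 2) else 0 := by
  simp [cRμ1]

lemma cRμ1_e_fLow [NeZero (n - 2 * k)] (p : Fin (n - 2 * k)) (j : Fin k) :
    cRμ1 n k a φ δ (.inl p) (.inr (.inl (fLow j))) = if p = 0 then Fb n k (j + 1 + k) else 0 := by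
  simp [cRμ1]

lemma cRμ1_e_fHigh (p : Fin (n - 2 * k)) (j : Fin k) :
    cRμ1 n k a φ δ (.inl p) (.inr (.inl (fHigh j))) = 0 := by
  simp [cRμ1]

lemma cRμ1_e_x (p : Fin (n - 2 * k)) (j : Fin k) :
    cRμ1 n k a φ δ (.inl p) (.inr (.inr j)) =
      ∑ t ∈ Finset.Icc ((p : ℕ) + 2) (n - 2 * k), a (t - p) (j + 1) • Eb n k t := rfl

lemma cRμ1_f_e (p : Fin (2 * k)) (q : Fin (n - 2 * k)) :
    cRμ1 n k a φ δ (.inr (.inl p)) (.inl q) = 0 := rfl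

lemma cRμ1_f_f (p q : Fin (2 * k)) :
    cRμ1 n k a φ δ (.inr (.inl p)) (.inr (.inl q)) = 0 := rfl

lemma cRμ1_fLow_x (i j : Fin k) :
    cRμ1 n k a φ δ (.inr (.inl (fLow i))) (.inr (.inr j)) =
      if i = j then Fb n k (i + 1) else 0 := by
  have : (i : ℕ) = j ∨ (i : ℕ) = j + k ↔ i = j := by omega
  simp [cRμ1, this]

lemma cRμ1_fHigh_x (i j : Fin k) :
    cRμ1 n k a φ δ (.inr (.inl (fHigh i))) (.inr (.inr j)) =
      if i = j then Fb n k (i + 1 + k) else 0 := by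
  have : k + (i : ℕ) = j ∨ k + (i : ℕ) = j + k ↔ i = j := by omega
  simp only [cRμ1, val_fHigh, this]
  rw [show k + (i : ℕ) + 1 = i + 1 + k by omega]

lemma cRμ1_x_e (i : Fin k) (q : Fin (n - 2 * k)) :
    cRμ1 n k a φ δ (.inr (.inr i)) (.inl q) = 0 := rfl

lemma cRμ1_x_fLow (i j : Fin k) :
    cRμ1 n k a φ δ (.inr (.inr i)) (.inr (.inl (fLow j))) =
      if i = j then -Fb n k (j + 1) else φ (i + 1) (j + 1) • Fb n k (j + 1 + k) := by
  simp [cRμ1, Fin.ext_iff]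

lemma cRμ1_x_fHigh (i j : Fin k) :
    cRμ1 n k a φ δ (.inr (.inr i)) (.inr (.inl (fHigh j))) = 0 := by
  have : (i : ℕ) ≠ k + j := by omega
  simp [cRμ1, this]

lemma cRμ1_x_x (i j : Fin k) :
    cRμ1 n k a φ δ (.inr (.inr i)) (.inr (.inr j)) =
      δ (i + 1) (j + 1) • Eb n k (n - 2 * k) := rfl

lemma sum_smul_cRμ1_x_fLow (w u : Fin k → ℂ) :
    ∑ i, ∑ j, (w i * u j) • cRμ1 n k a φ δ (.inr (.inr i)) (.inr (.inl (fLow j))) =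
      ∑ j : Fin k, ((∑ i : Fin k with i ≠ j, φ (i + 1) (j + 1) * w i) * u j) • Fb n k (j + 1 + k) -
        ∑ j : Fin k, (w j * u j) • Fb n k (j + 1) := by
  rw [sum_comm, ← sum_sub_distrib]
  refine sum_congr rfl fun j _ => ?_
  calc ∑ i, (w i * u j) • cRμ1 n k a φ δ (.inr (.inr i)) (.inr (.inl (fLow j)))
      = -((w j * u j) • Fb n k (j + 1)) +
          ∑ i : Fin k with i ≠ j, (φ (i + 1) (j + 1) * w i * u j) • Fb n k (j + 1 + k) := by
        simp [cRμ1_x_fLow, sum_ite, filter_eq', smul_smul, mul_comm, mul_left_comm, mul_assoc]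
    _ = _ := by rw [sum_mul, sum_smul, neg_add_eq_sub]

end StructureConstants

section Bracket

open Polynomial

variable {n k : ℕ} (a φ δ : ℕ → ℕ → ℂ)

lemma sum_range_smul_ePart_Eb (b : ℕ → ℂ) (i : ℕ) :
    ∑ r ∈ range (n - 2 * k), b (r + 2) • ePart (Eb n k (i + r + 2)) =
      ∑ t ∈ Icc (i + 2) (n - 2 * k), b (t - i) • ePart (Eb n k t) := by
  calc ∑ r ∈ range (n - 2 * k), b (r + 2) • ePart (Eb n k (i + r + 2))
      = ∑ t ∈ Ico (i + 2) (i + 2 + (n - 2 * k)), b (t - i) • ePart (Eb n k t) := by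
        rw [sum_Ico_eq_sum_range, add_tsub_cancel_left]
        refine sum_congr rfl fun r _ => ?_
        rw [show i + 2 + r - i = r + 2 by omega, add_right_comm i 2 r]
    _ = ∑ t ∈ Icc (i + 2) (n - 2 * k), b (t - i) • ePart (Eb n k t) := by
        refine (sum_subset (fun t ht => ?_) fun t ht ht' => ?_).symm
        · rw [mem_Icc] at ht
          exact mem_Ico.2 (by omega)
        · rw [mem_Ico] at ht
          rw [mem_Icc] at ht'
          rw [ePart_Eb_of_lt (by omega), smul_zero]

/-- The effect of right multiplication by `y` on the component along the `eᵢ`, as a polynomial in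
the shift. Its terms of degree at least `n - 2k` act as zero, so that the sum over `t` defining
`[eᵢ, xⱼ]` becomes a sum over a range that does not depend on `i`. -/
def eRight [NeZero (n - 2 * k)] (y : LRmu1 n k) : Module.End ℂ (Fin (n - 2 * k) → ℂ) :=
  aeval (shift ℂ (n - 2 * k)) (X * (C (ePart y 0) +
    ∑ j, C (xPart y j) * ∑ r ∈ range (n - 2 * k), C (a (r + 2) (j + 1)) * X ^ r))

/-- The coefficients of `f_{k+j}` in `[x, f_j]`, for `1 ≤ j ≤ k`. -/
def fLeft [NeZero (n - 2 * k)] (x : LRmu1 n k) : Fin k → ℂ := fun j =>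
  ePart x 0 + ∑ i with i ≠ j, φ (i + 1) (j + 1) * xPart x i

section Right

variable [NeZero (n - 2 * k)]

lemma commute_eRight (y z : LRmu1 n k) : Commute (eRight a y) (eRight a z) :=
  (Commute.all _ _).map (aeval (shift ℂ (n - 2 * k)))

lemma eRight_apply_zero (y : LRmu1 n k) (v : Fin (n - 2 * k) → ℂ) : eRight a y v 0 = 0 := by
  rw [eRight, map_mul, aeval_X, Module.End.mul_apply, shift_apply_zero]

lemma eRight_eq_zero {y : LRmu1 n k} (he : ePart y 0 = 0) (hx : xPart y = 0) :
    eRight a y = 0 := by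
  simp [eRight, he, hx]

lemma fLeft_eq_zero {x : LRmu1 n k} (he : ePart x 0 = 0) (hx : xPart x = 0) :
    fLeft φ x = 0 := by
  ext j
  simp [fLeft, he, hx]

lemma eRight_ePart_Eb_succ (y : LRmu1 n k) (i : ℕ) :
    eRight a y (ePart (Eb n k (i + 1))) = ePart y 0 • ePart (Eb n k (i + 2)) +
      ∑ j : Fin k, xPart y j •
        ∑ t ∈ Icc (i + 2) (n - 2 * k), a (t - i) (j + 1) • ePart (Eb n k t) := by
  have hsum (j : Fin k) := sum_range_smul_ePart_Eb (n := n) (k := k) (a · (j + 1)) i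
  simp only [← hsum]
  simp [eRight, mul_comm X, shift_ePart_Eb, shift_pow_ePart_Eb, smul_sum, smul_comm (a _ _),
    show ∀ r, i + 1 + r + 1 = i + r + 2 by omega]

lemma eRight_ePart_Eb_last (y : LRmu1 n k) : eRight a y (ePart (Eb n k (n - 2 * k))) = 0 := by
  have hN : n - 2 * k - 1 + 1 = n - 2 * k := Nat.succ_pred (NeZero.ne _)
  have h := eRight_ePart_Eb_succ a y (n - 2 * k - 1)
  rwa [Icc_eq_empty (by omega), ePart_Eb_of_lt (i := n - 2 * k - 1 + 2) (by omega), hN, smul_zero,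
    zero_add, sum_eq_zero (by simp)] at h

lemma brkRμ1_eq (x y : LRmu1 n k) :
    brkRμ1 n k a φ δ x y =
      ∑ p, ePart x p • (ePart y 0 • Eb n k (p + 2) + ∑ j : Fin k, xPart y j •
        ∑ t ∈ Icc ((p : ℕ) + 2) (n - 2 * k), a (t - p) (j + 1) • Eb n k t) +
      (∑ i : Fin k, ∑ j : Fin k, xPart x i * xPart y j * δ (i + 1) (j + 1)) •
        Eb n k (n - 2 * k) +
      ∑ j, (fLowPart x j * xPart y j - xPart x j * fLowPart y j) • Fb n k (j + 1) +
      ∑ j, (fHighPart x j * xPart y j + fLeft φ x j * fLowPart y j) • Fb n k (j + 1 + k) := by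
  simp only [brkRμ1, Fintype.sum_sum_type, sum_fin_two_mul, sum_add_distrib, cRμ1_e_e, smul_ite,
    smul_zero, sum_ite_eq', mem_univ, ↓reduceIte, cRμ1_f_e, sum_const_zero, cRμ1_x_e, add_zero,
    cRμ1_e_fLow, sum_ite_irrel, cRμ1_f_f, sum_smul_cRμ1_x_fLow, ne_eq, zero_add, cRμ1_e_fHigh,
    cRμ1_x_fHigh, cRμ1_e_x, smul_sum, smul_smul, mul_assoc, cRμ1_fLow_x, sum_ite_eq,
    cRμ1_fHigh_x, cRμ1_x_x, ePart_apply, xPart_apply, smul_add, sum_smul, fLowPart_apply,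
    sub_smul, sum_sub_distrib, fHighPart_apply, fLeft, add_mul, add_smul]
  abel

lemma xPart_brkRμ1 (x y : LRmu1 n k) : xPart (brkRμ1 n k a φ δ x y) = 0 := by
  simp [brkRμ1_eq]

lemma fLowPart_brkRμ1 (x y : LRmu1 n k) :
    fLowPart (brkRμ1 n k a φ δ x y) = fLowPart x * xPart y - xPart x * fLowPart y := by
  ext l
  simp [brkRμ1_eq, Pi.single_apply]

lemma fHighPart_brkRμ1 (x y : LRmu1 n k) :
    fHighPart (brkRμ1 n k a φ δ x y) = fHighPart x * xPart y + fLeft φ x * fLowPart y := by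
  ext l
  simp [brkRμ1_eq, Pi.single_apply]

lemma ePart_brkRμ1 (x y : LRmu1 n k) :
    ePart (brkRμ1 n k a φ δ x y) = eRight a y (ePart x) +
      (∑ i : Fin k, ∑ j : Fin k, xPart x i * xPart y j * δ (i + 1) (j + 1)) •
        ePart (Eb n k (n - 2 * k)) := by
  rw [ePart_eq_sum x]
  simp [brkRμ1_eq, eRight_ePart_Eb_succ, ePart_apply]

lemma ePart_brkRμ1_zero (hn : 2 * k + 2 ≤ n) (x y : LRmu1 n k) :
    ePart (brkRμ1 n k a φ δ x y) 0 = 0 := by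
  have hlast : ePart (Eb n k (n - 2 * k)) 0 = 0 := by
    have : n - 2 * k ≠ 1 := by omega
    simp [ePart_apply, Eb, this.symm]
  simp [ePart_brkRμ1, eRight_apply_zero, hlast]

end Right

end Bracket

end LRmu1

open LRmu1 in
theorem Rmu1_is_Leibniz_general (n k : ℕ) (hn : 2 * k + 2 ≤ n) (a φ δ : ℕ → ℕ → ℂ) :
    ∀ x y z : LRmu1 n k,
      brkRμ1 n k a φ δ x (brkRμ1 n k a φ δ y z)
        = brkRμ1 n k a φ δ (brkRμ1 n k a φ δ x y) z
          - brkRμ1 n k a φ δ (brkRμ1 n k a φ δ x z) y := by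
  intro x y z
  have : NeZero (n - 2 * k) := ⟨by omega⟩
  have hx := xPart_brkRμ1 a φ δ (n := n) (k := k)
  have hright (u v) : eRight a (brkRμ1 n k a φ δ u v) = 0 :=
    eRight_eq_zero a (ePart_brkRμ1_zero a φ δ hn u v) (hx u v)
  have hleft (u v) : fLeft φ (brkRμ1 n k a φ δ u v) = 0 :=
    fLeft_eq_zero φ (ePart_brkRμ1_zero a φ δ hn u v) (hx u v)
  have hcomm : eRight a z (eRight a y (ePart x)) = eRight a y (eRight a z (ePart x)) :=
    LinearMap.congr_fun (commute_eRight a z y).eq (ePart x)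
  apply ext_parts
  · simp [ePart_brkRμ1, hright, hx, hcomm, eRight_ePart_Eb_last]
  · simp only [map_sub, fLowPart_brkRμ1, hx]
    ring
  · simp only [map_sub, fHighPart_brkRμ1, fLowPart_brkRμ1, hleft, hx]
    ring
  · simp [hx]

/-- The family `R(μ₁,k)(a,φ,δ)` satisfies the Leibniz identity for all choices
of the parameters `a_{t,j}`, `φ_{i,j}`, `δ_{i,j} ∈ ℂ`. -/
theorem Rmu1_is_Leibniz (n k : ℕ) (hk : 1 ≤ k) (hn : 2 * k + 4 ≤ n)
    (a φ δ : ℕ → ℕ → ℂ) :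
    ∀ x y z : LRmu1 n k,
      brkRμ1 n k a φ δ x (brkRμ1 n k a φ δ y z)
        = brkRμ1 n k a φ δ (brkRμ1 n k a φ δ x y) z
          - brkRμ1 n k a φ δ (brkRμ1 n k a φ δ x z) y :=
  fun x y z => Rmu1_is_Leibniz_general n k (by omega) a φ δ x y z

end
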